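/- Let μ > 0, let g : ℝⁿ → ℝ be a differentiable convex function, and let f : ℝⁿ → ℝ be a differentiable function that is μ-uniformly convex with respect to g and satisfies f(0) = 0 and f(x) ≥ 0 for all x. Let τ : [0,∞) → [0,∞) be a continuously differentiable function with τ(0) = 0, τ'(t) > 0 for all t, and τ(t) → ∞ as t → ∞. Suppose Z : [0,∞) → ℝⁿ is differentiable and the curve t ↦ ∇g(Z(t)) is differentiable with derivative (d/dt)∇g(Z(t)) = −τ'(t)·∇f(Z(t)) for every t ≥ 0. Then for all t ≥ 0, f(Z(t)) ≤ exp(−μ·τ(t))·(μ·D_g(0, Z(0)) + f(Z(0))); in particular f(Z(t)) = O(exp(−μ·τ(t))). -/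

import Mathlib

open Set RealInnerProductSpace

/-- Bregman divergence `D_g(y, x) = g(y) − g(x) − ⟨∇g(x), y − x⟩`, where `g'`
is the gradient map of `g`. -/
noncomputable def breg {n : ℕ} (g : EuclideanSpace ℝ (Fin n) → ℝ)
    (g' : EuclideanSpace ℝ (Fin n) → EuclideanSpace ℝ (Fin n))
    (y x : EuclideanSpace ℝ (Fin n)) : ℝ :=
  g y - g x - ⟪g' x, y - x⟫

/-!
The energy `V = μ D_g(x, Z) + f(Z) - f(x)` satisfies `V' ≤ -μ τ' V`. Along the flow
`d/dt D_g(x, Z) = -τ' ⟨∇f(Z), Z - x⟩`, and uniform convexity bounds this by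
`-τ' (f(Z) - f(x) + μ D_g(x, Z))`. The remaining term of `V'` is `d/dt f(Z) = ⟨∇f(Z), Z'⟩`, which is
nonpositive: since `∇g` is monotone, `0 ≤ ⟨d/dt ∇g(Z), Z'⟩ = -τ' ⟨∇f(Z), Z'⟩`. Grönwall's
inequality and `D_g ≥ 0` then give the rate.
-/

open Filter Topology

section BregmanDivergence

variable {E : Type*} [NormedAddCommGroup E] [NormedSpace ℝ E]

/-- The Bregman divergence `D_g(y, x)` on a normed space, measuring the distance of a mirror flow to
its target. In place of the gradient map of `g`, `g'` is its Fréchet derivative, with values in the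
dual space. -/
def bregmanDiv (g : E → ℝ) (g' : E → E →L[ℝ] ℝ) (y x : E) : ℝ :=
  g y - g x - g' x (y - x)

variable {C : Set E} {g : E → ℝ} {g' : E → E →L[ℝ] ℝ} {x y : E}

lemma bregmanDiv_nonneg (hconv : ConvexOn ℝ C g) (hg : HasFDerivAt g (g' x) x)
    (hy : y ∈ C) (hx : x ∈ C) : 0 ≤ bregmanDiv g g' y x := by
  have hline : HasDerivAt (g ∘ AffineMap.lineMap x y) (g' x (y - x)) (0 : ℝ) :=
    HasFDerivAt.comp_hasDerivAt 0 (by simpa using hg) AffineMap.hasDerivAt_lineMap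
  have hslope := (hconv.comp_affineMap (AffineMap.lineMap x y)).le_slope_of_hasDerivAt
    (by simpa using hx) (by simpa using hy) one_pos hline
  rw [slope_def_field] at hslope
  simpa [bregmanDiv] using hslope

lemma bregmanDiv_add_bregmanDiv_swap :
    bregmanDiv g g' y x + bregmanDiv g g' x y = (g' y - g' x) (y - x) := by
  simp only [bregmanDiv, map_sub, sub_apply]
  ring

lemma hasDerivWithinAt_bregmanDiv {I : Set ℝ} {Z : ℝ → E} {Z' : E} {G' : E →L[ℝ] ℝ} {t : ℝ}
    (y : E) (hg : HasFDerivAt g (g' (Z t)) (Z t)) (hZ : HasDerivWithinAt Z Z' I t)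
    (hG : HasDerivWithinAt (fun s ↦ g' (Z s)) G' I t) :
    HasDerivWithinAt (fun s ↦ bregmanDiv g g' y (Z s)) (G' (Z t - y)) I t := by
  have hgZ := hg.comp_hasDerivWithinAt t hZ
  refine ((hgZ.const_sub (g y)).sub (hG.clm_apply (hZ.const_sub y))).congr_deriv ?_
  simp only [map_sub, map_neg]
  ring

end BregmanDivergence

section QuasiGradientFlow

variable {E : Type*} [NormedAddCommGroup E] [NormedSpace ℝ E]

lemma deriv_apply_deriv_nonneg {G : ℝ → E →L[ℝ] ℝ} {G' : E →L[ℝ] ℝ} {Z : ℝ → E} {Z' : E} {t : ℝ}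
    (hG : HasDerivAt G G' t) (hZ : HasDerivAt Z Z' t)
    (hmono : ∀ᶠ s in 𝓝 t, 0 ≤ (G s - G t) (Z s - Z t)) : 0 ≤ G' Z' := by
  have hslopes : Tendsto (fun s ↦ slope G t s (slope Z t s)) (𝓝[≠] t) (𝓝 (G' Z')) :=
    (isBoundedBilinearMap_apply.continuous.tendsto (G', Z')).comp
      ((hasDerivAt_iff_tendsto_slope.1 hG).prodMk_nhds (hasDerivAt_iff_tendsto_slope.1 hZ))
  refine ge_of_tendsto hslopes ((hmono.filter_mono nhdsWithin_le_nhds).mono fun s hs ↦ ?_)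
  simp only [slope_def_module, smul_apply, map_smul, smul_smul]
  exact smul_nonneg (mul_self_nonneg _) hs

lemma le_exp_mul_of_hasDerivWithinAt_le {I : Set ℝ} (hI : Convex ℝ I) {a a' v v' : ℝ → ℝ}
    (ha : ∀ t ∈ I, HasDerivWithinAt a (a' t) I t) (hv : ∀ t ∈ I, HasDerivWithinAt v (v' t) I t)
    (hle : ∀ t ∈ interior I, v' t ≤ -a' t * v t) {t₀ t : ℝ} (ht₀ : t₀ ∈ I) (ht : t ∈ I)
    (h : t₀ ≤ t) : v t ≤ Real.exp (-(a t - a t₀)) * v t₀ := by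
  have hderiv (s) (hs : s ∈ I) := (ha s hs).exp.mul (hv s hs)
  have hanti : AntitoneOn (fun s ↦ Real.exp (a s) * v s) I := by
    refine antitoneOn_of_hasDerivWithinAt_nonpos hI
      (fun s hs ↦ (hderiv s hs).continuousWithinAt)
      (fun s hs ↦ (hderiv s (interior_subset hs)).mono interior_subset) fun s hs ↦ ?_
    rw [mul_assoc, ← mul_add]
    exact mul_nonpos_of_nonneg_of_nonpos (Real.exp_pos _).le (by linarith [hle s hs])
  calc v t = Real.exp (-a t) * (Real.exp (a t) * v t) := by
        rw [← mul_assoc, ← Real.exp_add, neg_add_cancel, Real.exp_zero, one_mul]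
    _ ≤ Real.exp (-a t) * (Real.exp (a t₀) * v t₀) :=
        mul_le_mul_of_nonneg_left (hanti ht₀ ht h) (Real.exp_nonneg _)
    _ = Real.exp (-(a t - a t₀)) * v t₀ := by
        rw [← mul_assoc, ← Real.exp_add, neg_sub', sub_neg_eq_add]

variable {C : Set E} {f g : E → ℝ} {f' g' : E → E →L[ℝ] ℝ}

lemma apply_deriv_nonpos_of_hasDerivAt_neg_smul (hg : ∀ z ∈ C, HasFDerivAt g (g' z) z)
    (hconv : ConvexOn ℝ C g) {Z : ℝ → E} {Z' : E} {φ : E →L[ℝ] ℝ} {t c : ℝ} (hc : 0 < c)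
    (hZC : ∀ᶠ s in 𝓝 t, Z s ∈ C) (hZ : HasDerivAt Z Z' t)
    (hflow : HasDerivAt (fun s ↦ g' (Z s)) (-c • φ) t) : φ Z' ≤ 0 := by
  have hZt := hZC.self_of_nhds
  have hpair : 0 ≤ (-c • φ) Z' := by
    refine deriv_apply_deriv_nonneg hflow hZ (hZC.mono fun s hs ↦ ?_)
    rw [← bregmanDiv_add_bregmanDiv_swap (g := g)]
    exact add_nonneg (bregmanDiv_nonneg hconv (hg _ hZt) hs hZt)
      (bregmanDiv_nonneg hconv (hg _ hs) hZt hs)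
  rw [smul_apply, smul_eq_mul, neg_mul, neg_nonneg] at hpair
  exact nonpos_of_mul_nonpos_right hpair hc

theorem qgf_uniformly_convex_rate_general {μ : ℝ} (hμ : 0 ≤ μ) {x : E} (hx : x ∈ C)
    (hf : ∀ z ∈ C, HasFDerivAt f (f' z) z) (hg : ∀ z ∈ C, HasFDerivAt g (g' z) z)
    (hconv : ConvexOn ℝ C g)
    (hunif : ∀ z ∈ C, μ * bregmanDiv g g' x z ≤ bregmanDiv f f' x z)
    {I : Set ℝ} (hI : Convex ℝ I) {τ τ' : ℝ → ℝ}
    (hτ : ∀ t ∈ I, HasDerivWithinAt τ (τ' t) I t) (hτ' : ∀ t ∈ interior I, 0 < τ' t)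
    {Z Z' : ℝ → E} (hZC : ∀ t ∈ I, Z t ∈ C) (hZ : ∀ t ∈ I, HasDerivWithinAt Z (Z' t) I t)
    (hflow : ∀ t ∈ I, HasDerivWithinAt (fun s ↦ g' (Z s)) (-τ' t • f' (Z t)) I t)
    {t₀ t : ℝ} (ht₀ : t₀ ∈ I) (ht : t ∈ I) (h : t₀ ≤ t) :
    f (Z t) - f x ≤ Real.exp (-(μ * τ t - μ * τ t₀)) *
      (μ * bregmanDiv g g' x (Z t₀) + (f (Z t₀) - f x)) := by
  have henergy (s) (hs : s ∈ I) :
      HasDerivWithinAt (fun s ↦ μ * bregmanDiv g g' x (Z s) + (f (Z s) - f x))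
        (μ * (-τ' s • f' (Z s)) (Z s - x) + f' (Z s) (Z' s)) I s :=
    ((hasDerivWithinAt_bregmanDiv x (hg _ (hZC s hs)) (hZ s hs) (hflow s hs)).const_mul μ).add
      (((hf _ (hZC s hs)).comp_hasDerivWithinAt s (hZ s hs)).sub_const (f x))
  have hdissipation (s) (hs : s ∈ interior I) :
      μ * (-τ' s • f' (Z s)) (Z s - x) + f' (Z s) (Z' s) ≤
        -(μ * τ' s) * (μ * bregmanDiv g g' x (Z s) + (f (Z s) - f x)) := by
    have hsI := interior_subset hs
    have hIs := mem_interior_iff_mem_nhds.1 hs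
    have hdescent : f' (Z s) (Z' s) ≤ 0 :=
      apply_deriv_nonpos_of_hasDerivAt_neg_smul hg hconv (hτ' s hs)
        (mem_of_superset hIs hZC) ((hZ s hsI).hasDerivAt hIs) ((hflow s hsI).hasDerivAt hIs)
    have hgap : μ * bregmanDiv g g' x (Z s) + (f (Z s) - f x) ≤ f' (Z s) (Z s - x) := by
      have hdivf : bregmanDiv f f' x (Z s) = f x - f (Z s) + f' (Z s) (Z s - x) := by
        rw [bregmanDiv, ← neg_sub (Z s) x, map_neg, sub_neg_eq_add]
      linarith [hunif _ (hZC s hsI)]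
    have hscaled := mul_le_mul_of_nonneg_left hgap (mul_nonneg hμ (hτ' s hs).le)
    rw [smul_apply, smul_eq_mul]
    linarith
  have hdecay := le_exp_mul_of_hasDerivWithinAt_le hI (fun s hs ↦ (hτ s hs).const_mul μ)
    henergy hdissipation ht₀ ht h
  have hdiv := bregmanDiv_nonneg hconv (hg _ (hZC t ht)) hx (hZC t ht)
  exact (le_add_of_nonneg_left (mul_nonneg hμ hdiv)).trans hdecay

end QuasiGradientFlow

section Gradient

open InnerProductSpace

lemma breg_eq_bregmanDiv_toDual {n : ℕ} (g : EuclideanSpace ℝ (Fin n) → ℝ)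
    (g' : EuclideanSpace ℝ (Fin n) → EuclideanSpace ℝ (Fin n)) (y x : EuclideanSpace ℝ (Fin n)) :
    breg g g' y x = bregmanDiv g (fun z ↦ toDual ℝ _ (g' z)) y x :=
  rfl

lemma hasDerivAt_toDual {E : Type*} [NormedAddCommGroup E] [InnerProductSpace ℝ E]
    [CompleteSpace E] {u : ℝ → E} {u' : E} {t : ℝ} (hu : HasDerivAt u u' t) :
    HasDerivAt (fun s ↦ toDual ℝ E (u s)) (toDual ℝ E u') t :=
  -- Over `ℝ` conjugation is definitionally the identity, so the semilinear `innerSL` is linear.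
  (innerSL ℝ : E →L[ℝ] E →L[ℝ] ℝ).hasFDerivAt.comp_hasDerivAt t hu

end Gradient

/-- `O(e^{−μτ(t)})` convergence of the quasi-gradient flow
`(d/dt)∇g(Z) = −τ'(t)∇f(Z)` for `μ`-uniformly convex objectives. -/
theorem qgf_uniformly_convex_rate {n : ℕ} (μ : ℝ) (hμ : 0 < μ)
    (f g : EuclideanSpace ℝ (Fin n) → ℝ)
    (f' g' : EuclideanSpace ℝ (Fin n) → EuclideanSpace ℝ (Fin n))
    (hf' : ∀ x, HasGradientAt f (f' x) x)
    (hg' : ∀ x, HasGradientAt g (g' x) x)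
    (hgconv : ConvexOn ℝ univ g)
    (hunif : ∀ x y, μ * breg g g' x y ≤ breg f f' x y)
    (hf0 : f 0 = 0)
    (hfnn : ∀ x, 0 ≤ f x)
    (τ τ' : ℝ → ℝ)
    (hτ0 : τ 0 = 0)
    (hτnn : ∀ t, 0 ≤ t → 0 ≤ τ t)
    (hτ : ∀ t, 0 ≤ t → HasDerivAt τ (τ' t) t)
    (hτ'cont : ContinuousOn τ' (Ici 0))
    (hτ'pos : ∀ t, 0 ≤ t → 0 < τ' t)
    (hτinf : Filter.Tendsto τ Filter.atTop Filter.atTop)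
    (Z Z' : ℝ → EuclideanSpace ℝ (Fin n))
    (hZ : ∀ t, 0 ≤ t → HasDerivAt Z (Z' t) t)
    (hODE : ∀ t, 0 ≤ t →
      HasDerivAt (fun u => g' (Z u)) (-(τ' t) • f' (Z t)) t) :
    ∀ t, 0 ≤ t →
      f (Z t) ≤ Real.exp (-(μ * τ t)) * (μ * breg g g' 0 (Z 0) + f (Z 0)) := by
  intro t ht
  have hflow (s : ℝ) (hs : s ∈ Ici 0) :
      HasDerivWithinAt (fun u ↦ InnerProductSpace.toDual ℝ _ (g' (Z u)))
        (-τ' s • InnerProductSpace.toDual ℝ _ (f' (Z s))) (Ici 0) s := by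
    simpa only [map_smul] using (hasDerivAt_toDual (hODE s hs)).hasDerivWithinAt
  simp only [breg_eq_bregmanDiv_toDual] at hunif ⊢
  have hrate := qgf_uniformly_convex_rate_general hμ.le (mem_univ 0)
    (fun z _ ↦ (hf' z).hasFDerivAt) (fun z _ ↦ (hg' z).hasFDerivAt) hgconv
    (fun z _ ↦ hunif 0 z) (convex_Ici 0) (fun s hs ↦ (hτ s hs).hasDerivWithinAt)
    (fun s hs ↦ hτ'pos s (interior_subset hs)) (fun _ _ ↦ mem_univ _)
    (fun s hs ↦ (hZ s hs).hasDerivWithinAt) hflow self_mem_Ici ht ht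
  simpa only [hτ0, hf0, mul_zero, sub_zero] using hrate
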